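/- Let 0 ≤ s ≤ 5 and h = π/N ∈ (0,1]. There is a constant C, independent of h, such that for every t with |t| ≤ 1 and every f : 𝕋_h → ℂ, ‖P_{≤π/h}( S^±(t)(𝓛_h f) − 𝓛_h(S_h^±(t) f) )‖_{L²(𝕋)} ≤ C·h^{2s/5}·‖f‖_{H^s(𝕋_h)} (for either choice of sign). -/

import Mathlib

/-!
On the Fourier side both flows act diagonally. Linear interpolation multiplies the `2N`-periodic
extension of the discrete transform by `(2 sin(hk/2)/(hk))²` (`tF_interp`); this factor is at most
`1` in modulus and `O(k⁻²)`, so the coefficients of `𝓛_h f` are absolutely summable and the Airy flow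
really multiplies them by its symbol (`tF_series`). At a lattice frequency `k` the coefficient of
the difference is therefore bounded by `|e^{±itk³/24} - e^{±it s_h(k)}| |𝓕_h f(k)|`.

Taylor expansion of the sine gives `|k³/24 - s_h(k)| ≤ h²|k|⁵` (`abs_symbol_sub_le`). Since the
difference of the phases is also at most `2`, it is at most
`2 (h²|k|⁵)^{s/5} = 2 h^{2s/5} |k|^s` for `0 ≤ s ≤ 5` (`min_interp`). Squaring and summing over `k`
yields the estimate.

One frequency is special: `|k| ≤ π/h = N` admits `k = N`, which is aliased to `-N` on the lattice,
so that the two symbols are evaluated at different points. There `h²N⁵ = π²N³ ≥ 1`, and the trivial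
bound `2` is enough (`coeff_boundary`).
-/

open scoped Real BigOperators ENNReal NNReal
open MeasureTheory

noncomputable section

namespace FPU

/-- `e^{ix}`. -/
def eI (x : ℝ) : ℂ := Complex.exp (Complex.I * x)

/-- Mesh size `h = π / N`. -/
def msh (N : ℕ) : ℝ := Real.pi / N

/-- Frequency/index set `{-N, …, N-1}` of `𝕋_h` (identified with `(𝕋_h)*`). -/
def dual (N : ℕ) : Finset ℤ := Finset.Icc (-(N : ℤ)) ((N : ℤ) - 1)

/-- Reduction of an integer into `{-N, …, N-1}` modulo `2N`. -/
def red (N : ℕ) (m : ℤ) : ℤ := (m + N) % (2 * N) - N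

/-- Complexification of a real lattice function. -/
def cf (f : ℤ → ℝ) : ℤ → ℂ := fun n => (f n : ℂ)

/-- Discrete Fourier coefficient `𝓕_h f (k)` on `𝕋_h`. -/
def dF (N : ℕ) (f : ℤ → ℂ) (k : ℤ) : ℂ :=
  ((msh N / Real.sqrt (2 * Real.pi) : ℝ) : ℂ) *
    ∑ n ∈ dual N, f n * eI (-(msh N * n * k))

/-- `L²(𝕋_h)` norm. -/
def L2h (N : ℕ) (f : ℤ → ℂ) : ℝ :=
  Real.sqrt (msh N * ∑ n ∈ dual N, ‖f n‖ ^ 2)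

/-- `H^s(𝕋_h)` norm. -/
def Hs (N : ℕ) (s : ℝ) (f : ℤ → ℂ) : ℝ :=
  Real.sqrt (∑ k ∈ dual N, (1 + (k : ℝ) ^ 2) ^ s * ‖dF N f k‖ ^ 2)

/-- `ℍ^s(𝕋_h)` norm of a pair. -/
def HsPair (N : ℕ) (s : ℝ) (f g : ℤ → ℂ) : ℝ :=
  Real.sqrt (Hs N s f ^ 2 + Hs N s g ^ 2)

/-- Fourier multiplier on `𝕋_h` with symbol `m`. -/
def mult (N : ℕ) (m : ℤ → ℂ) (f : ℤ → ℂ) : ℤ → ℂ := fun n =>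
  ((1 / Real.sqrt (2 * Real.pi) : ℝ) : ℂ) *
    ∑ k ∈ dual N, m k * dF N f k * eI (msh N * n * k)

/-- Symbol of `∇_h`. -/
def gradSymb (N : ℕ) (k : ℤ) : ℂ :=
  2 * Complex.I / ((msh N : ℝ) : ℂ) * ((Real.sin (msh N * k / 2) : ℝ) : ℂ)

/-- `∇_h`. -/
def gradh (N : ℕ) : (ℤ → ℂ) → ℤ → ℂ := mult N (gradSymb N)

/-- `∇_h⁻¹` (vanishing at frequency `0`). -/
def gradhInv (N : ℕ) : (ℤ → ℂ) → ℤ → ℂ :=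
  mult N fun k => if k = 0 then 0 else (gradSymb N k)⁻¹

/-- The FPU dispersion `s_h(k) = (1/h²)(k - (2/h)sin(hk/2))`. -/
def sh (N : ℕ) (k : ℤ) : ℝ :=
  (1 / msh N ^ 2) * (k - (2 / msh N) * Real.sin (msh N * k / 2))

/-- Linear FPU propagator `S_h^σ(t)`, the multiplier with symbol `e^{iσt·s_h(k)}`. -/
def Sh (N : ℕ) (σ t : ℝ) : (ℤ → ℂ) → ℤ → ℂ :=
  mult N fun k => eI (σ * t * sh N k)

/-- `e^{σc∂_h}`, the multiplier with symbol `e^{iσck}`. -/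
def expDh (N : ℕ) (c : ℝ) : (ℤ → ℂ) → ℤ → ℂ :=
  mult N fun k => eI (c * k)

/-- Coupled FPU integral equation (component with sign `σ`, the other component is `w`). -/
def coupledEq (N : ℕ) (σ T : ℝ) (u0 : ℤ → ℂ) (u w : ℝ → ℤ → ℂ) : Prop :=
  ∀ t ∈ Set.Icc (-T) T, ∀ n : ℤ,
    u t n = Sh N σ t u0 n - (σ : ℂ) / 4 *
      ∫ t' in (0:ℝ)..t,
        Sh N σ (t - t')
          (gradh N (fun m =>
            (u t' m + expDh N (σ * (2 * t' / msh N ^ 2)) (w t') m) ^ 2)) n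

/-- Decoupled FPU integral equation with sign `σ`. -/
def decoupledEq (N : ℕ) (σ T : ℝ) (u0 : ℤ → ℂ) (v : ℝ → ℤ → ℂ) : Prop :=
  ∀ t ∈ Set.Icc (-T) T, ∀ n : ℤ,
    v t n = Sh N σ t u0 n - (σ : ℂ) / 4 *
      ∫ t' in (0:ℝ)..t, Sh N σ (t - t') (gradh N (fun m => (v t' m) ^ 2)) n

/-- Fourier coefficient on `𝕋 = ℝ/2πℤ`. -/
def tF (f : ℝ → ℂ) (k : ℤ) : ℂ :=
  ((1 / Real.sqrt (2 * Real.pi) : ℝ) : ℂ) *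
    ∫ x in (-Real.pi)..Real.pi, f x * eI (-(x * k))

/-- Fourier multiplier on `𝕋`. -/
def tmult (m : ℤ → ℂ) (f : ℝ → ℂ) : ℝ → ℂ := fun x =>
  ((1 / Real.sqrt (2 * Real.pi) : ℝ) : ℂ) * ∑' k : ℤ, m k * tF f k * eI (x * k)

/-- Airy propagator `S^σ(t)`, multiplier with symbol `e^{iσtk³/24}`. -/
def airy (σ t : ℝ) : (ℝ → ℂ) → ℝ → ℂ :=
  tmult fun k => eI (σ * t * (k : ℝ) ^ 3 / 24)

/-- `∂_x` as a Fourier multiplier on `𝕋`. -/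
def tderiv : (ℝ → ℂ) → ℝ → ℂ := tmult fun k => Complex.I * (k : ℂ)

/-- `L²(𝕋)` norm (computed on the Fourier side). -/
def L2T (f : ℝ → ℂ) : ℝ≥0∞ :=
  (∑' k : ℤ, ENNReal.ofReal (‖tF f k‖ ^ 2)) ^ (1/2 : ℝ)

/-- `H^s(𝕋)` norm. -/
def HsT (s : ℝ) (f : ℝ → ℂ) : ℝ≥0∞ :=
  (∑' k : ℤ, ENNReal.ofReal ((1 + (k : ℝ) ^ 2) ^ s * ‖tF f k‖ ^ 2)) ^ (1/2 : ℝ)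

/-- `L²(𝕋)` norm of the sharp frequency projection onto the set `K`. -/
def L2Tproj (K : Set ℤ) (f : ℝ → ℂ) : ℝ≥0∞ :=
  (∑' k : ℤ, ENNReal.ofReal (K.indicator (fun j => ‖tF f j‖ ^ 2) k)) ^ (1/2 : ℝ)

/-- Linear interpolation `𝓛_h` of a lattice function, as a function on `𝕋` (2π-periodic). -/
def interp (N : ℕ) (f : ℤ → ℂ) : ℝ → ℂ := fun x =>
  f (red N ⌊x / msh N⌋) +
    (f (red N (⌊x / msh N⌋ + 1)) - f (red N ⌊x / msh N⌋)) *
      (((x - msh N * ⌊x / msh N⌋) / msh N : ℝ) : ℂ)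

/-- KdV integral equation with sign `σ`. -/
def kdvEq (σ T : ℝ) (w0 : ℝ → ℂ) (w : ℝ → ℝ → ℂ) : Prop :=
  ∀ t ∈ Set.Icc (-T) T, ∀ x : ℝ,
    w t x = airy σ t w0 x - (σ : ℂ) / 4 *
      ∫ t' in (0:ℝ)..t, airy σ (t - t') (tderiv (fun y => (w t' y) ^ 2)) x

/-- Continuity in `H^s(𝕋)` on `[-T,T]`, together with membership in `H^s`. -/
def contHsT (s T : ℝ) (w : ℝ → ℝ → ℂ) : Prop :=
  ∀ t₀ ∈ Set.Icc (-T) T, HsT s (w t₀) < ⊤ ∧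
    ∀ ε : ℝ, 0 < ε → ∃ δ : ℝ, 0 < δ ∧ ∀ t ∈ Set.Icc (-T) T,
      |t - t₀| < δ → HsT s (fun x => w t x - w t₀ x) < ENNReal.ofReal ε

/-- Japanese bracket `⟨x⟩`. -/
def jap (x : ℝ) : ℝ := Real.sqrt (1 + x ^ 2)

/-- Space-time Fourier transform on `ℝ × 𝕋_h`. -/
def stF (N : ℕ) (u : ℝ → ℤ → ℂ) (τ : ℝ) (k : ℤ) : ℂ :=
  ((msh N / (2 * Real.pi) : ℝ) : ℂ) *
    ∑ n ∈ dual N, ∫ t : ℝ, eI (-(t * τ)) * eI (-(msh N * n * k)) * u t n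

/-- Bourgain norm `X^{s,b}_{h,σ}` (with sign `σ = ±1`). -/
def Xnorm (N : ℕ) (σ s b : ℝ) (u : ℝ → ℤ → ℂ) : ℝ≥0∞ :=
  (∑ k ∈ dual N, ∫⁻ τ : ℝ, ENNReal.ofReal
      (jap (k : ℝ) ^ (2 * s) * jap (τ - σ * sh N k) ^ (2 * b) * ‖stF N u τ k‖ ^ 2)) ^ (1/2 : ℝ)

/-- `Z^s_{h,σ}` norm. -/
def Znorm (N : ℕ) (σ s : ℝ) (u : ℝ → ℤ → ℂ) : ℝ≥0∞ :=
  Xnorm N σ s (-(1/2)) u +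
    (∑ k ∈ dual N, (∫⁻ τ : ℝ, ENNReal.ofReal
        (jap (k : ℝ) ^ s * (jap (τ - σ * sh N k))⁻¹ * ‖stF N u τ k‖)) ^ 2) ^ (1/2 : ℝ)

/-- `Y^s_{h,σ}` norm. -/
def Ynorm (N : ℕ) (σ s : ℝ) (u : ℝ → ℤ → ℂ) : ℝ≥0∞ :=
  Xnorm N σ s (1/2) u +
    (∑ k ∈ dual N, (∫⁻ τ : ℝ, ENNReal.ofReal
        (jap (k : ℝ) ^ s * ‖stF N u τ k‖)) ^ 2) ^ (1/2 : ℝ)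

/-- Time restricted norm `Y^{s,T}_{h,σ}` (infimum over extensions). -/
def YnormT (N : ℕ) (σ s T : ℝ) (u : ℝ → ℤ → ℂ) : ℝ≥0∞ :=
  ⨅ g : {g : ℝ → ℤ → ℂ // ∀ t ∈ Set.Icc (-T) T, ∀ n : ℤ, g t n = u t n},
    Ynorm N σ s g.1

/-- `L⁴(ℝ × 𝕋_h)` norm. -/
def L4st (N : ℕ) (u : ℝ → ℤ → ℂ) : ℝ≥0∞ :=
  (∫⁻ t : ℝ, ENNReal.ofReal (msh N * ∑ n ∈ dual N, ‖u t n‖ ^ 4)) ^ (1/4 : ℝ)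

/-- KdV resonance `Ψ²(k,k₁,k₂) = -(1/8)kk₁k₂`. -/
def Psi2 (k k₁ k₂ : ℤ) : ℝ := -(1/8 : ℝ) * (k : ℝ) * (k₁ : ℝ) * (k₂ : ℝ)

/-- KdV cubic resonance `Ψ³ = -(1/8)(a+b)(b+c)(a+c)`. -/
def Psi3 (a b c : ℤ) : ℝ :=
  -(1/8 : ℝ) * (((a + b : ℤ) : ℝ) * ((b + c : ℤ) : ℝ) * ((a + c : ℤ) : ℝ))

/-- KdV quartic resonance. -/
def Psi4 (k₁ k₂ k₃ k₄ : ℤ) : ℝ := Psi3 (k₁ + k₂) k₃ k₄ + Psi2 (k₁ + k₂) k₁ k₂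

/-- FPU resonance `Φ_h²`. -/
def Phi2 (h : ℝ) (k k₁ k₂ : ℤ) : ℝ :=
  -(8 / h ^ 3) *
    (Real.sin (h * k₁ / 4) * Real.sin (h * k₂ / 4) * Real.sin (h * k / 4))

/-- FPU cubic resonance `Φ_h³`. -/
def Phi3 (h : ℝ) (a b c : ℤ) : ℝ :=
  -(8 / h ^ 3) *
    (Real.sin (h * (a + b) / 4) * Real.sin (h * (b + c) / 4) * Real.sin (h * (a + c) / 4))

/-- FPU quartic resonance `Φ_h⁴`. -/
def Phi4 (h : ℝ) (k₁ k₂ k₃ k₄ : ℤ) : ℝ :=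
  Phi3 h (k₁ + k₂) k₃ k₄ + Phi2 h (k₁ + k₂) k₁ k₂

/-- Decoupled FPU profile equation in Fourier variables (sign `σ`), on the time set `I`. -/
def fpuProfileEq (N : ℕ) (σ : ℝ) (u0 : ℤ → ℂ) (V : ℝ → ℤ → ℂ) (I : Set ℝ) : Prop :=
  ∀ t ∈ I, ∀ k ∈ dual N,
    dF N (V t) k = dF N u0 k -
      (σ : ℂ) * Complex.I / (2 * ((msh N : ℝ) : ℂ)) * ((Real.sin (msh N * k / 2) : ℝ) : ℂ) *
        ∫ t' in (0:ℝ)..t,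
          ∑ k₁ ∈ dual N,
            (if k₁ ≠ 0 ∧ k - k₁ ≠ 0 ∧ k - k₁ ∈ dual N then
              eI (σ * t' * Phi2 (msh N) k k₁ (k - k₁)) * dF N (V t') k₁ * dF N (V t') (k - k₁)
            else 0)

/-- KdV profile equation in Fourier variables (sign `σ`), on the time set `I`;
`W t k` denotes the `k`-th Fourier coefficient of the profile at time `t`. -/
def kdvProfileEq (σ : ℝ) (w0 : ℤ → ℂ) (W : ℝ → ℤ → ℂ) (I : Set ℝ) : Prop :=
  ∀ t ∈ I, ∀ k : ℤ,
    W t k = w0 k -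
      (σ : ℂ) * Complex.I * (k : ℂ) / 4 *
        ∫ t' in (0:ℝ)..t,
          ∑' k₁ : ℤ,
            (if k₁ ≠ 0 ∧ k - k₁ ≠ 0 then
              eI (σ * t' * Psi2 k k₁ (k - k₁)) * W t' k₁ * W t' (k - k₁)
            else 0)

/-- `H^s(𝕋)` norm of a Fourier coefficient sequence (extended-real valued). -/
def HsSeq (s : ℝ) (a : ℤ → ℂ) : ℝ≥0∞ :=
  (∑' k : ℤ, ENNReal.ofReal ((1 + (k : ℝ) ^ 2) ^ s * ‖a k‖ ^ 2)) ^ (1/2 : ℝ)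

/-- `H^s(𝕋)` norm of a Fourier coefficient sequence (real valued). -/
def HsSeqR (s : ℝ) (a : ℤ → ℂ) : ℝ :=
  Real.sqrt (∑' k : ℤ, (1 + (k : ℝ) ^ 2) ^ s * ‖a k‖ ^ 2)

/-- `ℓ²(ℤ)` norm of a Fourier coefficient sequence. -/
def l2R (a : ℤ → ℂ) : ℝ := Real.sqrt (∑' k : ℤ, ‖a k‖ ^ 2)

/-- `ℓ²` norm of the projection of a coefficient sequence to the frequency set `K`. -/
def l2projR (K : Set ℤ) (a : ℤ → ℂ) : ℝ :=
  Real.sqrt (∑' k : ℤ, K.indicator (fun j => ‖a j‖ ^ 2) k)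

/-- Periodic discrete Laplacian `Δ_h` on real lattice functions. -/
def lapR (N : ℕ) (f : ℤ → ℝ) (n : ℤ) : ℝ :=
  (f (red N (n + 1)) + f (red N (n - 1)) - 2 * f n) / msh N ^ 2

/-! ### Exponentials and sums over the lattice -/

lemma eI_add (x y : ℝ) : eI (x + y) = eI x * eI y := by
  simp [eI, ← Complex.exp_add, mul_add]

lemma eI_zero : eI 0 = 1 := by simp [eI]

lemma norm_eI (x : ℝ) : ‖eI x‖ = 1 := by
  simp [eI, mul_comm Complex.I, Complex.norm_exp_ofReal_mul_I]

lemma eI_neg_mul_self (x : ℝ) : eI (-x) * eI x = 1 := by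
  rw [← eI_add, neg_add_cancel, eI_zero]

lemma continuous_eI : Continuous eI := by
  unfold eI; fun_prop

lemma eI_two_pi_int (m : ℤ) : eI (2 * Real.pi * m) = 1 := by
  unfold eI
  rw [Complex.exp_eq_one_iff]
  exact ⟨m, by push_cast; ring⟩

@[fun_prop]
lemma continuous_eI_comp {g : ℝ → ℝ} (hg : Continuous g) : Continuous fun x => eI (g x) :=
  continuous_eI.comp hg

lemma msh_pos {N : ℕ} (hN : 1 ≤ N) : 0 < msh N :=
  div_pos Real.pi_pos (by exact_mod_cast hN)

lemma msh_mul {N : ℕ} (hN : 1 ≤ N) : msh N * N = Real.pi :=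
  div_mul_cancel₀ _ (by positivity)

lemma mem_dual {N : ℕ} {n : ℤ} : n ∈ dual N ↔ -(N : ℤ) ≤ n ∧ n < N := by
  simp only [dual, Finset.mem_Icc]; omega

lemma sum_dual_eq_range (N : ℕ) (F : ℤ → ℂ) :
    ∑ n ∈ dual N, F n = ∑ j ∈ Finset.range (2 * N), F (-N + j) := by
  symm
  refine Finset.sum_nbij (fun j : ℕ => -(N : ℤ) + j) ?_ ?_ ?_ (fun _ _ => rfl)
  · intro j hj
    rw [Finset.mem_range] at hj
    rw [mem_dual]; omega
  · intro a _ b _ h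
    simp only at h
    omega
  · intro n hn
    rw [Finset.mem_coe, mem_dual] at hn
    refine ⟨(n + N).toNat, ?_, ?_⟩
    · simp only [Finset.coe_range, Set.mem_Iio]; omega
    · simp only; omega

/-- Translation invariance of the sum over a period. -/
lemma sum_dual_shift (N : ℕ) (F : ℤ → ℂ) (h : F N = F (-N)) :
    ∑ n ∈ dual N, F (n + 1) = ∑ n ∈ dual N, F n := by
  rw [sum_dual_eq_range, sum_dual_eq_range]
  have h1 := Finset.sum_range_succ (fun j : ℕ => F (-N + j)) (2 * N)
  have h2 := Finset.sum_range_succ' (fun j : ℕ => F (-N + j)) (2 * N)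
  rw [h1] at h2
  have e : (-(N : ℤ) + ((2 * N : ℕ) : ℤ)) = N := by push_cast; ring
  rw [e, h] at h2
  simp only [Nat.cast_zero, add_zero, add_left_inj] at h2
  rw [h2]
  refine Finset.sum_congr rfl fun j _ => ?_
  push_cast; ring_nf

lemma red_of_mem {N : ℕ} {n : ℤ} (hn : n ∈ dual N) : red N n = n := by
  rw [mem_dual] at hn
  unfold red
  rw [Int.emod_eq_of_lt] <;> omega

lemma red_self (N : ℕ) : red N N = -N := by
  unfold red
  have : ((N : ℤ) + N) = 2 * N := by ring
  rw [this, Int.emod_self]; ring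

/-- The boundary frequencies `N` and `-N` agree on the lattice. -/
lemma eI_boundary {N : ℕ} (hN : 1 ≤ N) (k : ℤ) :
    eI (-(msh N * N * k)) = eI (-(msh N * (-N) * k)) := by
  have : -(msh N * (-N) * k) = -(msh N * N * k) + 2 * Real.pi * k := by
    rw [← msh_mul hN]; ring
  rw [this, eI_add, eI_two_pi_int, mul_one]

/-! ### The discrete Fourier transform -/

/-- Orthogonality of the lattice characters: the sum `S` of a nontrivial one satisfies
`z * S = S` with `z ≠ 1`. -/
lemma sum_eI_dual {N : ℕ} (hN : 1 ≤ N) {l : ℤ} (h0 : l ≠ 0) (h1 : |l| < 2 * N) :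
    ∑ n ∈ dual N, eI (-(msh N * n * l)) = 0 := by
  have hs := sum_dual_shift N (fun n => eI (-(msh N * n * l)))
    (by have := eI_boundary hN l; push_cast at *; exact this)
  have hz : ∀ n : ℤ, eI (-(msh N * ((n + 1 : ℤ) : ℝ) * l))
      = eI (-(msh N * l)) * eI (-(msh N * n * l)) := by
    intro n
    rw [← eI_add]; congr 1; push_cast; ring
  simp only [hz] at hs
  rw [← Finset.mul_sum] at hs
  have hne : eI (-(msh N * l)) ≠ 1 := by
    intro he
    unfold eI at he
    rw [Complex.exp_eq_one_iff] at he
    obtain ⟨m, hm⟩ := he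
    have h2 : -(msh N * l) = m * (2 * Real.pi) := by
      have : Complex.I * ((-(msh N * l) : ℝ) : ℂ) = Complex.I * ((m * (2 * Real.pi) : ℝ) : ℂ) := by
        rw [hm]; push_cast; ring
      exact_mod_cast mul_left_cancel₀ Complex.I_ne_zero this
    have h3 : -(l : ℝ) = m * (2 * N) := by
      apply mul_left_cancel₀ (msh_pos hN).ne'
      rw [← msh_mul hN] at h2
      linarith
    have h4 : -l = m * (2 * N) := by exact_mod_cast h3
    have h5 : m ≠ 0 := by rintro rfl; simp at h4; exact h0 h4
    have h6 : |l| = |m| * (2 * N) := by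
      rw [← abs_neg, h4, abs_mul, abs_of_nonneg (by positivity : (0:ℤ) ≤ 2 * N)]
    have h7 : 1 ≤ |m| := Int.one_le_abs h5
    nlinarith
  by_contra hS
  exact hne (mul_right_cancel₀ hS (by rw [hs, one_mul]))

lemma dF_mult {N : ℕ} (hN : 1 ≤ N) (m f : ℤ → ℂ) {k : ℤ} (hk : k ∈ dual N) :
    dF N (mult N m f) k = m k * dF N f k := by
  rw [show dF N (mult N m f) k = ((msh N / Real.sqrt (2 * Real.pi) : ℝ) : ℂ) *
    ∑ n ∈ dual N, mult N m f n * eI (-(msh N * n * k)) from rfl]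
  have h1 : ∀ n : ℤ, mult N m f n * eI (-(msh N * n * k)) =
      ∑ j ∈ dual N, ((1 / Real.sqrt (2 * Real.pi) : ℝ) : ℂ) * (m j * dF N f j) *
        eI (-(msh N * n * ((k - j : ℤ) : ℝ))) := by
    intro n
    unfold mult
    rw [mul_assoc, Finset.sum_mul, Finset.mul_sum]
    refine Finset.sum_congr rfl fun j _ => ?_
    rw [show -(msh N * n * ((k - j : ℤ) : ℝ)) = msh N * n * j + -(msh N * n * k) by
      push_cast; ring, eI_add]
    ring
  simp only [h1]
  rw [Finset.sum_comm]
  simp only [← Finset.mul_sum]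
  rw [Finset.sum_eq_single k]
  · have : ∑ n ∈ dual N, eI (-(msh N * n * ((k - k : ℤ) : ℝ))) = 2 * N := by
      simp [eI_zero, dual]
      norm_cast
      omega
    rw [this]
    have hc : ((msh N / Real.sqrt (2 * Real.pi) : ℝ) : ℂ) *
        ((1 / Real.sqrt (2 * Real.pi) : ℝ) : ℂ) * (2 * N) = 1 := by
      have h2 : Real.sqrt (2 * Real.pi) * Real.sqrt (2 * Real.pi) = 2 * Real.pi :=
        Real.mul_self_sqrt (by positivity)
      have h3 : (msh N / Real.sqrt (2 * Real.pi)) * (1 / Real.sqrt (2 * Real.pi)) * (2 * N)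
          = 1 := by
        rw [div_mul_div_comm, h2, div_mul_eq_mul_div, ← msh_mul hN]
        have := msh_pos hN
        field_simp
      exact_mod_cast h3
    linear_combination (m k * dF N f k) * hc
  · intro j hj hjk
    rw [mem_dual] at hj hk
    rw [sum_eI_dual hN (by omega) (by rw [abs_lt]; omega), mul_zero]
  · intro h; exact absurd hk h

lemma dF_boundary {N : ℕ} (hN : 1 ≤ N) (f : ℤ → ℂ) : dF N f N = dF N f (-N) := by
  unfold dF
  congr 1
  refine Finset.sum_congr rfl fun n _ => ?_
  have := eI_boundary hN n
  congr 1
  push_cast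
  rw [show msh N * n * N = msh N * N * n by ring, this]
  congr 1; ring

lemma norm_dF_le (N : ℕ) (f : ℤ → ℂ) : ∃ D : ℝ, 0 ≤ D ∧ ∀ k, ‖dF N f k‖ ≤ D := by
  refine ⟨|msh N / Real.sqrt (2 * Real.pi)| * ∑ n ∈ dual N, ‖f n‖, by positivity, fun k => ?_⟩
  unfold dF
  rw [norm_mul, Complex.norm_real, Real.norm_eq_abs]
  gcongr
  refine (norm_sum_le _ _).trans (Finset.sum_le_sum fun n _ => ?_)
  rw [norm_mul, norm_eI, mul_one]

/-! ### Fourier coefficients of the linear interpolation -/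

/-- The Fourier symbol of linear interpolation at `θ = hk`, namely
`∫₀¹ ((1-u) e^{-iθu} + u e^{iθ(1-u)}) du = (2 sin(θ/2)/θ)²`. -/
def interpSymb (θ : ℝ) : ℂ :=
  ∫ u in (0:ℝ)..1, ((1 - u : ℝ) * eI (-(θ * u)) + (u : ℝ) * eI (θ * (1 - u)))

lemma norm_interpSymb_le (θ : ℝ) : ‖interpSymb θ‖ ≤ 1 := by
  have := intervalIntegral.norm_integral_le_of_norm_le_const (a := 0) (b := 1) (C := 1)
    (f := fun u : ℝ => ((1 - u : ℝ) * eI (-(θ * u)) + (u : ℝ) * eI (θ * (1 - u)) : ℂ)) ?_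
  · simpa [interpSymb] using this
  · intro u hu
    rw [Set.uIoc_of_le zero_le_one] at hu
    refine (norm_add_le _ _).trans ?_
    rw [norm_mul, norm_mul, norm_eI, norm_eI, Complex.norm_real, Complex.norm_real,
      Real.norm_of_nonneg (by linarith [hu.2]), Real.norm_of_nonneg hu.1.le]
    linarith

lemma norm_interpSymb_le' {θ : ℝ} (hθ : θ ≠ 0) : ‖interpSymb θ‖ ≤ 4 / θ ^ 2 := by
  set c : ℂ := -(Complex.I * θ) with hc
  have hc0 : c ≠ 0 := by simp [hc, hθ]
  have key : interpSymb θ = (eI (-θ) + eI θ - 2) / c ^ 2 := by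
    have hder : ∀ u ∈ Set.uIcc (0:ℝ) 1, HasDerivAt
        (fun u : ℝ => Complex.exp (c * u) *
          (((1 - u) + u * eI θ) / c + (1 - eI θ) / c ^ 2))
        ((1 - u : ℝ) * eI (-(θ * u)) + (u : ℝ) * eI (θ * (1 - u))) u := by
      intro u _
      have h1 : HasDerivAt (fun u : ℝ => (u : ℂ)) 1 u := Complex.ofRealCLM.hasDerivAt
      have h2 := ((h1.const_mul c).cexp).mul
        ((((h1.const_sub 1).add (h1.mul_const (eI θ))).div_const c).add_const
          ((1 - eI θ) / c ^ 2))
      refine h2.congr_deriv ?_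
      have e1 : eI (-(θ * u)) = Complex.exp (c * u) := by
        unfold eI; congr 1; rw [hc]; push_cast; ring
      have e2 : eI (θ * (1 - u)) = eI θ * Complex.exp (c * u) := by
        rw [← e1, ← eI_add]; congr 1; ring
      rw [e1, e2]
      push_cast
      simp only [Pi.add_apply]
      field_simp
      ring
    unfold interpSymb
    rw [intervalIntegral.integral_eq_sub_of_hasDerivAt hder
      (Continuous.intervalIntegrable (by fun_prop) _ _)]
    have e1 : Complex.exp (c * ((1:ℝ):ℂ)) = eI (-θ) := by
      unfold eI; congr 1; rw [hc]; push_cast; ring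
    rw [e1]
    have e2 := eI_neg_mul_self θ
    simp only [Complex.ofReal_zero, Complex.ofReal_one, mul_zero, Complex.exp_zero]
    field_simp
    linear_combination (c - 1) * e2
  rw [key, norm_div, norm_pow]
  have : ‖c‖ ^ 2 = θ ^ 2 := by simp [hc]
  rw [this]
  gcongr
  refine (norm_sub_le _ _).trans ?_
  have := norm_add_le (eI (-θ)) (eI θ)
  rw [norm_eI, norm_eI] at this
  simp only [Complex.norm_ofNat]
  linarith

lemma interp_on {N : ℕ} (hN : 1 ≤ N) (f : ℤ → ℂ) (n : ℤ) {x : ℝ}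
    (hx : x ∈ Set.Ioo (msh N * n) (msh N * (n + 1))) :
    interp N f x = f (red N n) + (f (red N (n + 1)) - f (red N n)) *
      (((x - msh N * n) / msh N : ℝ) : ℂ) := by
  have hp := msh_pos hN
  have : ⌊x / msh N⌋ = n := by
    rw [Int.floor_eq_iff, le_div_iff₀ hp, div_lt_iff₀ hp]
    constructor <;> linarith [hx.1, hx.2]
  simp only [interp, this]

lemma interp_cell_integrable {N : ℕ} (hN : 1 ≤ N) (f : ℤ → ℂ) (k n : ℤ) :
    IntervalIntegrable (fun x => interp N f x * eI (-(x * k))) volume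
      (msh N * n) (msh N * (n + 1)) := by
  have hp := msh_pos hN
  have hle : msh N * n ≤ msh N * (n + 1) := by nlinarith
  have hc : IntervalIntegrable (fun x : ℝ => (f (red N n) + (f (red N (n + 1)) - f (red N n)) *
      (((x - msh N * n) / msh N : ℝ) : ℂ)) * eI (-(x * k))) volume
      (msh N * n) (msh N * (n + 1)) :=
    Continuous.intervalIntegrable (by fun_prop) _ _
  refine hc.congr_uIoo fun x hx => ?_
  rw [Set.uIoo_of_le hle] at hx
  simp only [interp_on hN f n hx]

lemma interp_cell_integral {N : ℕ} (hN : 1 ≤ N) (f : ℤ → ℂ) (k n : ℤ) :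
    ∫ x in (msh N * n)..(msh N * (n + 1)), interp N f x * eI (-(x * k)) =
      msh N * (f (red N n) * eI (-(msh N * n * k)) *
          (∫ u in (0:ℝ)..1, ((1 - u : ℝ) : ℂ) * eI (-(msh N * k * u))) +
        f (red N (n + 1)) * eI (-(msh N * ((n + 1 : ℤ) : ℝ) * k)) *
          ∫ u in (0:ℝ)..1, ((u : ℝ) : ℂ) * eI (msh N * k * (1 - u))) := by
  have hp := msh_pos hN
  have hsub := intervalIntegral.smul_integral_comp_mul_add (a := 0) (b := 1)
    (fun x => interp N f x * eI (-(x * k))) (msh N) (msh N * n)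
  rw [mul_zero, zero_add, mul_one, show msh N + msh N * n = msh N * (n + 1) by ring] at hsub
  rw [← hsub, Complex.real_smul]
  congr 1
  rw [← intervalIntegral.integral_const_mul, ← intervalIntegral.integral_const_mul,
    ← intervalIntegral.integral_add (Continuous.intervalIntegrable (by fun_prop) _ _)
      (Continuous.intervalIntegrable (by fun_prop) _ _)]
  refine intervalIntegral.integral_congr_uIoo fun u hu => ?_
  rw [Set.uIoo_of_le zero_le_one] at hu
  have hx : msh N * u + msh N * n ∈ Set.Ioo (msh N * n) (msh N * (n + 1)) :=
    ⟨by nlinarith [hu.1], by nlinarith [hu.2]⟩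
  simp only [interp_on hN f n hx]
  have e0 : (msh N * u + msh N * n - msh N * n) / msh N = u := by field_simp; ring
  have e1 : eI (-((msh N * u + msh N * n) * k)) =
      eI (-(msh N * n * k)) * eI (-(msh N * k * u)) := by
    rw [← eI_add]; congr 1; ring
  have e2 : eI (-(msh N * ((n + 1 : ℤ) : ℝ) * k)) * eI (msh N * k * (1 - u)) =
      eI (-(msh N * n * k)) * eI (-(msh N * k * u)) := by
    rw [← eI_add, ← eI_add]; congr 1; push_cast; ring
  rw [e0, e1]
  push_cast
  push_cast at e2
  linear_combination (-(f (red N (n + 1)) * u)) * e2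

/-- The nodes `h(-N + j)`, `0 ≤ j ≤ 2N`, run from `-π` to `π`. -/
lemma cell_endpoints {N : ℕ} (hN : 1 ≤ N) :
    msh N * (-N + ((0 : ℕ) : ℝ)) = -Real.pi ∧ msh N * (-N + ((2 * N : ℕ) : ℝ)) = Real.pi := by
  rw [← msh_mul hN]
  push_cast
  constructor <;> ring

lemma interp_integrable {N : ℕ} (hN : 1 ≤ N) (f : ℤ → ℂ) (k : ℤ) :
    IntervalIntegrable (fun x => interp N f x * eI (-(x * k))) volume (-Real.pi) Real.pi := by
  have := IntervalIntegrable.trans_iterate (n := 2 * N) (μ := volume)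
    (f := fun x => interp N f x * eI (-(x * k))) (a := fun j : ℕ => msh N * (-N + (j : ℝ))) ?_
  · simp only [(cell_endpoints hN).1, (cell_endpoints hN).2] at this
    exact this
  · intro j _
    have := interp_cell_integrable hN f k (-N + j)
    push_cast at this ⊢
    rw [← add_assoc]
    exact this

/-- On the Fourier side linear interpolation is the periodic extension of the discrete transform
multiplied by `interpSymb (hk)`. -/
lemma tF_interp {N : ℕ} (hN : 1 ≤ N) (f : ℤ → ℂ) (k : ℤ) :
    tF (interp N f) k = interpSymb (msh N * k) * dF N f k := by
  have hsum := intervalIntegral.sum_integral_adjacent_intervals (n := 2 * N) (μ := volume)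
    (f := fun x => interp N f x * eI (-(x * k))) (a := fun j : ℕ => msh N * (-N + (j : ℝ))) ?_
  swap
  · intro j _
    have := interp_cell_integrable hN f k (-N + j)
    push_cast at this ⊢
    rw [← add_assoc]
    exact this
  simp only [(cell_endpoints hN).1, (cell_endpoints hN).2] at hsum
  have hcell : ∀ j : ℕ, ∫ x in (msh N * (-N + (j : ℝ)))..(msh N * (-N + ((j + 1 : ℕ) : ℝ))),
      interp N f x * eI (-(x * k)) =
      (fun n : ℤ => ∫ x in (msh N * n)..(msh N * (n + 1)), interp N f x * eI (-(x * k)))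
        (-N + j) := by
    intro j
    push_cast
    rw [← add_assoc]
  simp only [hcell] at hsum
  rw [← sum_dual_eq_range N
    (fun n : ℤ => ∫ x in (msh N * n)..(msh N * (n + 1)), interp N f x * eI (-(x * k)))] at hsum
  simp only [interp_cell_integral hN] at hsum
  rw [← Finset.mul_sum, Finset.sum_add_distrib, ← Finset.sum_mul, ← Finset.sum_mul,
    sum_dual_shift N (fun n => f (red N n) * eI (-(msh N * n * k))) ?_] at hsum
  swap
  · have h1 : red N (-N) = -N := red_of_mem (mem_dual.2 ⟨le_rfl, by omega⟩)
    have := eI_boundary hN k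
    simp only [red_self, h1]
    push_cast at *
    rw [this]
  have hred : ∑ n ∈ dual N, f (red N n) * eI (-(msh N * n * k)) =
      ∑ n ∈ dual N, f n * eI (-(msh N * n * k)) :=
    Finset.sum_congr rfl fun n hn => by rw [red_of_mem hn]
  rw [hred, ← mul_add, ← intervalIntegral.integral_add
    (Continuous.intervalIntegrable (by fun_prop) _ _)
    (Continuous.intervalIntegrable (by fun_prop) _ _)] at hsum
  unfold tF dF interpSymb
  rw [← hsum]
  push_cast
  ring

lemma summable_tF_interp {N : ℕ} (hN : 1 ≤ N) (f : ℤ → ℂ) :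
    Summable fun k : ℤ => ‖tF (interp N f) k‖ := by
  obtain ⟨D, hD0, hD⟩ := norm_dF_le N f
  have hp := msh_pos hN
  have hs : Summable fun k : ℤ => 4 * D / msh N ^ 2 * (1 / (k : ℝ) ^ 2) :=
    (Real.summable_one_div_int_pow.2 one_lt_two).mul_left _
  refine hs.of_norm_bounded_eventually ?_
  rw [Filter.eventually_cofinite]
  refine (Set.finite_singleton (0 : ℤ)).subset fun k hk => ?_
  by_contra h0
  apply hk
  have h0' : (k : ℝ) ≠ 0 := by exact_mod_cast h0
  rw [norm_norm, tF_interp hN, norm_mul]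
  calc ‖interpSymb (msh N * k)‖ * ‖dF N f k‖ ≤ 4 / (msh N * k) ^ 2 * D := by
        gcongr
        · exact norm_interpSymb_le' (by positivity)
        · exact hD k
    _ = _ := by field_simp

/-! ### Absolutely convergent Fourier series -/

lemma integral_eI (l : ℤ) : ∫ x in (-Real.pi)..Real.pi, eI (x * l) =
    if l = 0 then ((2 * Real.pi : ℝ) : ℂ) else 0 := by
  split_ifs with h
  · subst h
    simp [eI_zero]
    ring
  · have hl : (Complex.I * l : ℂ) ≠ 0 := by simp [h]
    have := integral_exp_mul_complex (a := -Real.pi) (b := Real.pi) hl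
    have e : ∀ x : ℝ, eI (x * l) = Complex.exp (Complex.I * l * x) := by
      intro x; unfold eI; congr 1; push_cast; ring
    simp only [e]
    rw [this, ← e, ← e, show Real.pi * (l : ℝ) = -Real.pi * l + 2 * Real.pi * l by ring, eI_add,
      eI_two_pi_int, mul_one, sub_self, zero_div]

/-- The function `(2π)^{-1/2} ∑ a_k e^{ixk}` has Fourier coefficients `a_k` when `a ∈ ℓ¹`. -/
lemma tF_series {a : ℤ → ℂ} (ha : Summable fun k => ‖a k‖) (k : ℤ) :
    tF (fun x => ((1 / Real.sqrt (2 * Real.pi) : ℝ) : ℂ) * ∑' j : ℤ, a j * eI (x * j)) k = a k := by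
  have hs : HasSum (fun j : ℤ => ∫ x in (-Real.pi)..Real.pi, a j * eI (x * j) * eI (-(x * k)))
      (∫ x in (-Real.pi)..Real.pi, (∑' j : ℤ, a j * eI (x * j)) * eI (-(x * k))) := by
    refine intervalIntegral.hasSum_integral_of_dominated_convergence (fun j _ => ‖a j‖) ?_ ?_ ?_ ?_ ?_
    · intro j
      exact Continuous.aestronglyMeasurable (by fun_prop)
    · intro j
      refine Filter.Eventually.of_forall fun x _ => ?_
      rw [norm_mul, norm_mul, norm_eI, norm_eI, mul_one, mul_one]
    · exact Filter.Eventually.of_forall fun x _ => ha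
    · exact intervalIntegrable_const
    · refine Filter.Eventually.of_forall fun x _ => ?_
      have : Summable fun j : ℤ => a j * eI (x * j) := by
        apply Summable.of_norm
        simpa [norm_eI] using ha
      exact this.hasSum.mul_right _
  have hj : ∀ j : ℤ, ∫ x in (-Real.pi)..Real.pi, a j * eI (x * j) * eI (-(x * k)) =
      if j = k then a k * ((2 * Real.pi : ℝ) : ℂ) else 0 := by
    intro j
    have e : ∀ x : ℝ, a j * eI (x * j) * eI (-(x * k)) = a j * eI (x * ((j - k : ℤ) : ℝ)) := by
      intro x
      rw [mul_assoc, ← eI_add]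
      congr 2; push_cast; ring
    simp only [e]
    rw [intervalIntegral.integral_const_mul, integral_eI]
    by_cases h : j = k
    · subst h; simp
    · rw [if_neg (by omega), if_neg h, mul_zero]
  simp only [hj] at hs
  have h1 := hs.unique (hasSum_ite_eq k _)
  unfold tF
  simp only [mul_assoc] at h1 ⊢
  rw [intervalIntegral.integral_const_mul, h1]
  have h2 : Real.sqrt (2 * Real.pi) * Real.sqrt (2 * Real.pi) = 2 * Real.pi :=
    Real.mul_self_sqrt (by positivity)
  have h3 : (1 / Real.sqrt (2 * Real.pi)) * (1 / Real.sqrt (2 * Real.pi)) * (2 * Real.pi) = 1 := by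
    rw [div_mul_div_comm, h2]
    field_simp
  have h4 : ((1 / Real.sqrt (2 * Real.pi) : ℝ) : ℂ) * ((1 / Real.sqrt (2 * Real.pi) : ℝ) : ℂ) *
    ((2 * Real.pi : ℝ) : ℂ) = 1 := by exact_mod_cast h3
  linear_combination a k * h4

lemma tF_sub_interp {N : ℕ} (hN : 1 ≤ N) (σ t : ℝ) (f : ℤ → ℂ) (k : ℤ) :
    tF (fun x => airy σ t (interp N f) x - interp N (Sh N σ t f) x) k =
      eI (σ * t * (k : ℝ) ^ 3 / 24) * tF (interp N f) k - tF (interp N (Sh N σ t f)) k := by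
  have ha : Summable fun k : ℤ => ‖eI (σ * t * (k : ℝ) ^ 3 / 24) * tF (interp N f) k‖ := by
    simpa [norm_eI] using summable_tF_interp hN f
  rw [← tF_series ha k]
  have hcont : Continuous (airy σ t (interp N f)) := by
    unfold airy tmult
    refine continuous_const.mul (continuous_tsum (fun j => by fun_prop) ha fun j x => ?_)
    rw [norm_mul _ (eI (x * j)), norm_eI, mul_one]
  have hi : IntervalIntegrable (fun x => airy σ t (interp N f) x * eI (-(x * k))) volume
      (-Real.pi) Real.pi := Continuous.intervalIntegrable (by fun_prop) _ _
  unfold tF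
  rw [← mul_sub]
  congr 1
  simp only [sub_mul]
  rw [intervalIntegral.integral_sub hi (interp_integrable hN _ k)]
  rfl

/-! ### Comparison of the dispersion relations -/

lemma abs_sin_sub_le (x : ℝ) : |Real.sin x - (x - x ^ 3 / 6)| ≤ |x| ^ 5 / 6 := by
  rcases le_total |x| 1 with h | h
  · refine (Real.sin_bound h).trans ?_
    have : 0 ≤ |x| ^ 5 := by positivity
    linarith
  · wlog hx : 0 ≤ x generalizing x
    · have := this (-x) (by rwa [abs_neg]) (by linarith)
      rw [Real.sin_neg, abs_neg, ← abs_neg] at this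
      convert this using 2
      ring
    · rw [abs_of_nonneg hx] at h ⊢
      have h1 := Real.sin_ge_sub_cube hx
      have h2 := Real.sin_le hx
      have h3 : x ^ 3 ≤ x ^ 5 := pow_le_pow_right₀ h (by norm_num)
      rw [abs_le]
      constructor <;> linarith [pow_nonneg hx 5]

lemma abs_symbol_sub_le {N : ℕ} (hN : 1 ≤ N) (k : ℤ) :
    |(k : ℝ) ^ 3 / 24 - sh N k| ≤ msh N ^ 2 * |(k : ℝ)| ^ 5 := by
  have hp := msh_pos hN
  have h := abs_sin_sub_le (msh N * k / 2)
  have e : (k : ℝ) ^ 3 / 24 - sh N k = 2 / msh N ^ 3 *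
      (Real.sin (msh N * k / 2) - (msh N * k / 2 - (msh N * k / 2) ^ 3 / 6)) := by
    unfold sh
    field_simp
    ring
  rw [e, abs_mul, abs_of_pos (by positivity : 0 < 2 / msh N ^ 3)]
  calc 2 / msh N ^ 3 * _ ≤ 2 / msh N ^ 3 * (|msh N * k / 2| ^ 5 / 6) := by gcongr
    _ = msh N ^ 2 * |(k : ℝ)| ^ 5 / 96 := by
        rw [abs_div, abs_mul, abs_of_pos hp, abs_two]
        field_simp
        ring
    _ ≤ _ := by
        have : 0 ≤ msh N ^ 2 * |(k : ℝ)| ^ 5 := by positivity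
        linarith

lemma norm_eI_sub_le (x y : ℝ) : ‖eI x - eI y‖ ≤ |x - y| := by
  have : eI x - eI y = eI y * (eI (x - y) - 1) := by
    rw [mul_sub, ← eI_add]
    simp
  rw [this, norm_mul, norm_eI, one_mul]
  exact Real.norm_exp_I_mul_ofReal_sub_one_le

lemma norm_eI_sub_le_two (x y : ℝ) : ‖eI x - eI y‖ ≤ 2 := by
  refine (norm_sub_le _ _).trans ?_
  rw [norm_eI, norm_eI]; norm_num

/-- Interpolation between the trivial bound `2` and the bound `h²|k|⁵`. -/
lemma min_interp {s h κ A : ℝ} (hs0 : 0 ≤ s) (hs5 : s ≤ 5) (hh : 0 < h) (hκ : 0 ≤ κ)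
    (hA0 : A ≤ 2) (hA : A ≤ 2 * (h ^ 2 * κ ^ 5)) :
    A ≤ 2 * (h ^ (2 * s / 5) * κ ^ s) := by
  set Q := h ^ 2 * κ ^ 5 with hQ
  have hQ0 : 0 ≤ Q := by positivity
  have e : h ^ (2 * s / 5) * κ ^ s = Q ^ (s / 5) := by
    rw [hQ, Real.mul_rpow (by positivity) (by positivity), ← Real.rpow_natCast,
      ← Real.rpow_natCast, ← Real.rpow_mul hh.le, ← Real.rpow_mul hκ]
    congr 2 <;> push_cast <;> ring
  rw [e]
  rcases le_total Q 1 with h1 | h1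
  · have : Q ≤ Q ^ (s / 5) := by
      conv_lhs => rw [← Real.rpow_one Q]
      exact Real.rpow_le_rpow_of_exponent_ge' hQ0 h1 (by linarith) (by linarith)
    linarith
  · have : 1 ≤ Q ^ (s / 5) := Real.one_le_rpow h1 (by linarith)
    linarith

/-- Squared form of the interpolated bound, with `|k|` replaced by `⟨k⟩`. -/
lemma coeff_bound {s h κ A D : ℝ} (hs0 : 0 ≤ s) (hs5 : s ≤ 5) (hh : 0 < h) (hA' : 0 ≤ A)
    (hA0 : A ≤ 2) (hA : A ≤ 2 * (h ^ 2 * |κ| ^ 5)) :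
    (A * D) ^ 2 ≤ 4 * (h ^ (2 * s / 5)) ^ 2 * ((1 + κ ^ 2) ^ s * D ^ 2) := by
  have h1 := min_interp hs0 hs5 hh (abs_nonneg κ) hA0 hA
  have h2 : (|κ| ^ s) ^ 2 ≤ (1 + κ ^ 2) ^ s := by
    rw [← Real.rpow_natCast, ← Real.rpow_mul (abs_nonneg κ), mul_comm s, Real.rpow_mul (abs_nonneg κ),
      Real.rpow_natCast, sq_abs]
    exact Real.rpow_le_rpow (sq_nonneg κ) (by linarith) hs0
  calc (A * D) ^ 2 = A ^ 2 * D ^ 2 := by ring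
    _ ≤ (2 * (h ^ (2 * s / 5) * |κ| ^ s)) ^ 2 * D ^ 2 := by gcongr
    _ = 4 * (h ^ (2 * s / 5)) ^ 2 * ((|κ| ^ s) ^ 2 * D ^ 2) := by ring
    _ ≤ _ := by gcongr

/-- Bound on one Fourier coefficient of the difference at a frequency of the lattice. -/
lemma coeff_dual {s : ℝ} (hs0 : 0 ≤ s) (hs5 : s ≤ 5) {N : ℕ} (hN : 1 ≤ N) {σ t : ℝ}
    (hσ : σ = 1 ∨ σ = -1) (ht : |t| ≤ 1) (f : ℤ → ℂ) {k : ℤ} (hk : k ∈ dual N) :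
    ‖tF (fun x => airy σ t (interp N f) x - interp N (Sh N σ t f) x) k‖ ^ 2 ≤
      4 * (msh N ^ (2 * s / 5)) ^ 2 * ((1 + (k : ℝ) ^ 2) ^ s * ‖dF N f k‖ ^ 2) := by
  have hp := msh_pos hN
  have hσ' : |σ| = 1 := by rcases hσ with h | h <;> simp [h]
  rw [tF_sub_interp hN, tF_interp hN, tF_interp hN, Sh, dF_mult hN _ _ hk]
  have e : eI (σ * t * (k : ℝ) ^ 3 / 24) * (interpSymb (msh N * k) * dF N f k) -
      interpSymb (msh N * k) * (eI (σ * t * sh N k) * dF N f k) =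
      interpSymb (msh N * k) * ((eI (σ * t * (k : ℝ) ^ 3 / 24) - eI (σ * t * sh N k)) *
        dF N f k) := by ring
  rw [e, norm_mul, norm_mul]
  refine le_trans ?_ (coeff_bound hs0 hs5 hp
    (norm_nonneg (eI (σ * t * (k : ℝ) ^ 3 / 24) - eI (σ * t * sh N k)))
    (norm_eI_sub_le_two _ _) ?_)
  · exact pow_le_pow_left₀ (by positivity)
      (mul_le_of_le_one_left (by positivity) (norm_interpSymb_le _)) 2
  · refine (norm_eI_sub_le _ _).trans ?_
    rw [show σ * t * (k : ℝ) ^ 3 / 24 - σ * t * sh N k =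
      σ * (t * ((k : ℝ) ^ 3 / 24 - sh N k)) by ring, abs_mul, hσ', one_mul, abs_mul]
    have h1 := abs_symbol_sub_le hN k
    have h2 : 0 ≤ msh N ^ 2 * |(k : ℝ)| ^ 5 := by positivity
    have h3 := mul_le_mul ht h1 (abs_nonneg _) zero_le_one
    linarith

/-- The frequency `N` lies in the range of the projection but not in the dual lattice, where it
is aliased to `-N`. The phases at `N` and `-N` are unrelated, but `h²N⁵ ≥ 1`, so the
trivial bound on their difference suffices. -/
lemma coeff_boundary {s : ℝ} (hs0 : 0 ≤ s) (hs5 : s ≤ 5) {N : ℕ} (hN : 1 ≤ N) (σ t : ℝ)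
    (f : ℤ → ℂ) :
    ‖tF (fun x => airy σ t (interp N f) x - interp N (Sh N σ t f) x) N‖ ^ 2 ≤
      4 * (msh N ^ (2 * s / 5)) ^ 2 *
        ((1 + (((-N : ℤ)) : ℝ) ^ 2) ^ s * ‖dF N f (-N)‖ ^ 2) := by
  have hp := msh_pos hN
  have hk : (-N : ℤ) ∈ dual N := mem_dual.2 ⟨le_rfl, by omega⟩
  rw [tF_sub_interp hN, tF_interp hN, tF_interp hN, dF_boundary hN, dF_boundary hN, Sh,
    dF_mult hN _ _ hk]
  have e : eI (σ * t * ((N : ℤ) : ℝ) ^ 3 / 24) *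
      (interpSymb (msh N * ((N : ℤ) : ℝ)) * dF N f (-N)) -
      interpSymb (msh N * ((N : ℤ) : ℝ)) * (eI (σ * t * sh N (-N)) * dF N f (-N)) =
      interpSymb (msh N * ((N : ℤ) : ℝ)) *
        ((eI (σ * t * ((N : ℤ) : ℝ) ^ 3 / 24) - eI (σ * t * sh N (-N))) * dF N f (-N)) := by
    ring
  rw [e, norm_mul, norm_mul]
  refine le_trans ?_ (coeff_bound hs0 hs5 hp
    (norm_nonneg (eI (σ * t * ((N : ℤ) : ℝ) ^ 3 / 24) - eI (σ * t * sh N (-N))))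
    (norm_eI_sub_le_two _ _) ?_)
  · exact pow_le_pow_left₀ (by positivity)
      (mul_le_of_le_one_left (by positivity) (norm_interpSymb_le _)) 2
  · refine (norm_eI_sub_le_two _ _).trans ?_
    have hN' : (1 : ℝ) ≤ N := by exact_mod_cast hN
    have h1 : msh N ^ 2 * |((-N : ℤ) : ℝ)| ^ 5 = Real.pi ^ 2 * (N : ℝ) ^ 3 := by
      push_cast
      rw [abs_neg, abs_of_nonneg (by positivity), ← msh_mul hN]; ring
    rw [h1]
    have h2 : 1 ≤ Real.pi ^ 2 := one_le_pow₀ (by linarith [Real.pi_gt_three])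
    have h3 : 1 ≤ (N : ℝ) ^ 3 := one_le_pow₀ hN'
    nlinarith

/-! ### Summation over the lattice frequencies -/

/-- comparison between the Airy flow and the linear FPU flow. -/
theorem flows_comparison (s : ℝ) (hs0 : 0 ≤ s) (hs5 : s ≤ 5) :
    ∃ C : ℝ, 0 < C ∧ ∀ N : ℕ, 1 ≤ N → msh N ≤ 1 →
      ∀ σ : ℝ, σ = 1 ∨ σ = -1 → ∀ t : ℝ, |t| ≤ 1 → ∀ f : ℤ → ℂ,
        L2Tproj {k : ℤ | |(k : ℝ)| ≤ Real.pi / msh N}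
            (fun x => airy σ t (interp N f) x - interp N (Sh N σ t f) x)
          ≤ ENNReal.ofReal (C * msh N ^ (2 * s / 5) * Hs N s f) := by
  -- Each coefficient contributes a factor `4`, and `N` repeats the bound at `-N`: `8 ≤ 3²`.
  refine ⟨3, by norm_num, fun N hN _ σ hσ t ht f => ?_⟩
  have hp := msh_pos hN
  set g := fun x => airy σ t (interp N f) x - interp N (Sh N σ t f) x with hg
  have hK : ∀ k : ℤ, |(k : ℝ)| ≤ Real.pi / msh N ↔ k ∈ insert (N : ℤ) (dual N) := by
    intro k
    have : Real.pi / msh N = N := by rw [← msh_mul hN]; field_simp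
    rw [this, Finset.mem_insert, mem_dual, ← Int.cast_abs,
      show ((N : ℕ) : ℝ) = ((N : ℤ) : ℝ) by simp, Int.cast_le, abs_le]
    omega
  have hnot : (N : ℤ) ∉ dual N := by rw [mem_dual]; omega
  set T := ∑ k ∈ dual N, (1 + (k : ℝ) ^ 2) ^ s * ‖dF N f k‖ ^ 2 with hT
  have hT0 : 0 ≤ T := Finset.sum_nonneg fun k _ => by positivity
  set b := msh N ^ (2 * s / 5) with hb
  have hb0 : 0 ≤ b := by positivity
  have hfin : ∑ k ∈ insert (N : ℤ) (dual N), ‖tF g k‖ ^ 2 ≤ (3 * b * Hs N s f) ^ 2 := by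
    rw [Finset.sum_insert hnot]
    have h1 : ∑ k ∈ dual N, ‖tF g k‖ ^ 2 ≤ 4 * b ^ 2 * T := by
      rw [hT, Finset.mul_sum]
      exact Finset.sum_le_sum fun k hk => coeff_dual hs0 hs5 hN hσ ht f hk
    have h2 : ‖tF g N‖ ^ 2 ≤ 4 * b ^ 2 * T := by
      refine (coeff_boundary hs0 hs5 hN σ t f).trans ?_
      gcongr
      exact Finset.single_le_sum (f := fun k : ℤ => (1 + (k : ℝ) ^ 2) ^ s * ‖dF N f k‖ ^ 2)
        (fun k _ => by positivity) (mem_dual.2 ⟨le_rfl, by omega⟩)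
    have h3 : Hs N s f ^ 2 = T := Real.sq_sqrt hT0
    rw [mul_pow, mul_pow, h3]
    have : 0 ≤ b ^ 2 * T := by positivity
    linarith
  have hX : 0 ≤ 3 * b * Hs N s f := mul_nonneg (by positivity) (Real.sqrt_nonneg _)
  unfold L2Tproj
  rw [tsum_eq_sum (s := insert (N : ℤ) (dual N)) fun k hk => by
    rw [Set.indicator_of_notMem (by rw [Set.mem_ofPred_eq, hK]; exact hk), ENNReal.ofReal_zero]]
  rw [Finset.sum_congr rfl fun k hk => by
    rw [Set.indicator_of_mem (by rw [Set.mem_ofPred_eq, hK]; exact hk)],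
    ← ENNReal.ofReal_sum_of_nonneg fun k _ => by positivity]
  calc _ ≤ ENNReal.ofReal ((3 * b * Hs N s f) ^ 2) ^ (1/2 : ℝ) := by gcongr
    _ = ENNReal.ofReal (3 * b * Hs N s f) := by
        rw [ENNReal.ofReal_rpow_of_nonneg (by positivity) (by norm_num), ← Real.sqrt_eq_rpow,
          Real.sqrt_sq hX]

end FPU

end
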